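/- Gaussian concentration for sets with barycenter at the origin: Let d ≥ 1 and let γ be the standard Gaussian measure on ℝ^d. Let A ⊆ ℝ^d be a measurable set with γ(A) > 0 and ∫_A x dγ(x) = 0. For r > 0, let A_r = {x ∈ ℝ^d : dist(x, A) ≤ r} be the r-enlargement of A. Then 1 − γ(A_r) ≤ γ(A)^{-1} e^{-r²/2}. -/

import Mathlib

open MeasureTheory ENNReal
open scoped RealInnerProductSpace


/-- The standard Gaussian measure on `ℝ^d`. -/
noncomputable def stdGaussian (d : ℕ) : Measure (EuclideanSpace ℝ (Fin d)) :=
  volume.withDensity fun x =>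
    ENNReal.ofReal ((2 * Real.pi) ^ (-(d : ℝ) / 2) * Real.exp (-‖x‖ ^ 2 / 2))

/-!
The Gaussian density satisfies `ρ x * ρ y = κ² * exp (-‖x - y‖² / 2) * exp (-⟪x, y⟫)`, where
`κ = (2π) ^ (-d / 2)`. If `A` and `B` are at distance at least `r`, then `f = ρ * 1_A` and
`g = ρ * 1_B` satisfy the duality `f x * g y ≤ C * exp (-⟪x, y⟫)` with `C = κ² * exp (-r² / 2)`.
As `f` is centered, the functional Blaschke–Santaló inequality `(∫ f) (∫ g) ≤ C * (2π)^d` reads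
`γ(A) γ(B) ≤ exp (-r² / 2)`, and it remains to take for `B` the complement of `A_r`.

The Santaló inequality is proved by Lehec's induction on the dimension. On the half-line it is the
Prékopa–Leindler inequality in logarithmic scale. Given a density on `ℝ × E`, translate the median
of its first coordinate to `0` and apply a shear along `E` so that both half-spaces have a centered
marginal on `E`. Translations only move the center, and the adjoint shear of the dual variable
preserves the duality. For fixed `y` and `y'` in `E` the half-line case bounds the product of the
partial integrals of `f` and `g` over the first coordinate, and the induction hypothesis then
applies to these marginals. The two halves add up to the right constant because `f` has the same
mass on both.

This yields some center depending on the function. To reach the barycenter instead, apply it to `g`: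
if `w` is a center for `g`, then `g (w + y)` is dual to `f x * exp ⟪w, x⟫`, whose integral is at
least `∫ f` since `1 + ⟪w, x⟫ ≤ exp ⟪w, x⟫` and `f` is centered.
-/

open Module Set
open scoped Pointwise

section PrekopaLeindler

theorem volume_add_volume_le_of_isCompact {K L : Set ℝ} (hK : IsCompact K) (hL : IsCompact L)
    (hK₀ : K.Nonempty) (hL₀ : L.Nonempty) : volume K + volume L ≤ volume (K + L) := by
  obtain ⟨a, haK, ha⟩ := hK.exists_isGreatest hK₀
  obtain ⟨b, hbL, hb⟩ := hL.exists_isLeast hL₀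
  -- `b + K` and `a + L` lie on either side of `a + b`.
  have hdisj : AEDisjoint volume (b +ᵥ K) (a +ᵥ L) := by
    refine measure_mono_null (t := {a + b}) ?_ (by simp)
    rintro _ ⟨⟨x, hx, rfl⟩, ⟨y, hy, hxy⟩⟩
    simp only [vadd_eq_add, mem_singleton_iff] at hxy ⊢
    linarith [ha hx, hb hy]
  calc volume K + volume L = volume (b +ᵥ K) + volume (a +ᵥ L) := by
        rw [measure_vadd, measure_vadd]
    _ = volume ((b +ᵥ K) ∪ (a +ᵥ L)) :=
        (measure_union₀ (hL.measurableSet.const_vadd a).nullMeasurableSet hdisj).symm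
    _ ≤ volume (K + L) := by
        refine measure_mono (union_subset ?_ ?_)
        · rintro _ ⟨x, hx, rfl⟩
          exact ⟨x, hx, b, hbL, add_comm x b⟩
        · rintro _ ⟨y, hy, rfl⟩
          exact ⟨a, haK, y, hy, rfl⟩

theorem volume_add_volume_le {A B : Set ℝ} (hA : MeasurableSet A) (hB : MeasurableSet B)
    (hA₀ : A.Nonempty) (hB₀ : B.Nonempty) : volume A + volume B ≤ volume (A + B) := by
  obtain ⟨a, ha⟩ := hA₀
  obtain ⟨b, hb⟩ := hB₀
  rw [hA.measure_eq_iSup_isCompact, hB.measure_eq_iSup_isCompact]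
  simp_rw [iSup_and']
  refine ENNReal.biSup_add_biSup_le' ⟨∅, by simp⟩ ⟨∅, by simp⟩ ?_
  rintro K ⟨hKA, hK⟩ L ⟨hLB, hL⟩
  calc volume K + volume L ≤ volume (insert a K) + volume (insert b L) := by
        gcongr <;> exact subset_insert _ _
    _ ≤ volume (insert a K + insert b L) :=
        volume_add_volume_le_of_isCompact (hK.insert a) (hL.insert b) (insert_nonempty _ _)
          (insert_nonempty _ _)
    _ ≤ volume (A + B) :=
        measure_mono (add_subset_add (insert_subset ha hKA) (insert_subset hb hLB))

theorem lintegral_eq_lintegral_measure_ofReal_lt {α : Type*} [MeasurableSpace α] (μ : Measure α)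
    [SFinite μ] {f : α → ℝ≥0∞} (hf : Measurable f) :
    ∫⁻ x, f x ∂μ = ∫⁻ t in Ioi 0, μ {x | ENNReal.ofReal t < f x} := by
  have hS : MeasurableSet {p : α × ℝ | ENNReal.ofReal p.2 < f p.1} :=
    measurableSet_lt (by fun_prop) (by fun_prop)
  have hslice : ∀ a : ℝ≥0∞, volume.restrict (Ioi 0) {t : ℝ | ENNReal.ofReal t < a} = a := by
    intro a
    have hm : MeasurableSet {t : ℝ | ENNReal.ofReal t < a} :=
      measurableSet_lt (by fun_prop) (by fun_prop)
    rw [Measure.restrict_apply hm]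
    induction a with
    | top => simp
    | coe a =>
      have : {t : ℝ | ENNReal.ofReal t < a} ∩ Ioi 0 = Ioo 0 (a : ℝ) := by
        ext t
        refine and_comm.trans (and_congr_right fun ht => ?_)
        rw [← ENNReal.ofReal_coe_nnreal]
        exact ENNReal.ofReal_lt_ofReal_iff_of_nonneg ht.le
      simp [this]
  calc ∫⁻ x, f x ∂μ
      = (μ.prod (volume.restrict (Ioi 0))) {p : α × ℝ | ENNReal.ofReal p.2 < f p.1} := by
        rw [Measure.prod_apply hS]
        exact lintegral_congr fun x => (hslice (f x)).symm
    _ = ∫⁻ t in Ioi 0, μ {x | ENNReal.ofReal t < f x} := Measure.prod_apply_symm hS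

theorem rpow_mul_rpow_le_ofReal_mul_add {p q : ℝ} (hp : 0 < p) (hq : 0 < q) (hpq : p + q = 1)
    (x y : ℝ≥0∞) : x ^ p * y ^ q ≤ ENNReal.ofReal p * x + ENNReal.ofReal q * y := by
  have hconj : p⁻¹.HolderConjugate q⁻¹ := by
    constructor <;> simp [hpq, hp, hq]
  have := ENNReal.young_inequality (x ^ p) (y ^ q) hconj
  rwa [ENNReal.rpow_rpow_inv hp.ne', ENNReal.rpow_rpow_inv hq.ne', ENNReal.ofReal_inv_of_pos hp,
    ENNReal.ofReal_inv_of_pos hq, div_eq_mul_inv, div_eq_mul_inv, inv_inv, inv_inv, mul_comm x,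
    mul_comm y] at this

variable {p q : ℝ} {F G h : ℝ → ℝ≥0∞}

theorem add_volume_superlevel_le_of_iSup_eq_one (hp : 0 < p) (hq : 0 < q) (hpq : p + q = 1)
    (hF : Measurable F) (hG : Measurable G) (hF₁ : ⨆ u, F u = 1) (hG₁ : ⨆ v, G v = 1)
    (H : ∀ u v, F u ^ p * G v ^ q ≤ h (p * u + q * v)) (t : ℝ≥0∞) :
    ENNReal.ofReal p * volume {u | t < F u} + ENNReal.ofReal q * volume {v | t < G v} ≤
      volume {w | t < h w} := by
  rcases lt_or_ge t 1 with ht | ht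
  · have hsub : p • {u | t < F u} + q • {v | t < G v} ⊆ {w | t < h w} := by
      rintro _ ⟨_, ⟨u, hu, rfl⟩, _, ⟨v, hv, rfl⟩, rfl⟩
      calc t = t ^ p * t ^ q := by
            rw [← ENNReal.rpow_add_of_nonneg _ _ hp.le hq.le, hpq, ENNReal.rpow_one]
        _ < F u ^ p * G v ^ q :=
            ENNReal.mul_lt_mul (ENNReal.rpow_lt_rpow hu hp) (ENNReal.rpow_lt_rpow hv hq)
        _ ≤ h (p * u + q * v) := H u v
    have hF_nonempty : {u | t < F u}.Nonempty := lt_iSup_iff.1 (ht.trans_eq hF₁.symm)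
    have hG_nonempty : {v | t < G v}.Nonempty := lt_iSup_iff.1 (ht.trans_eq hG₁.symm)
    have hvol := volume_add_volume_le
      ((measurableSet_lt measurable_const hF).const_smul₀ p)
      ((measurableSet_lt measurable_const hG).const_smul₀ q)
      hF_nonempty.smul_set hG_nonempty.smul_set
    simp only [Measure.addHaar_smul, finrank_self, pow_one, abs_of_pos hp, abs_of_pos hq] at hvol
    exact hvol.trans (measure_mono hsub)
  · have hF_empty : {u | t < F u} = ∅ :=
      eq_empty_of_forall_notMem fun u hu => (hu.trans_le (le_iSup F u)).not_ge (hF₁.trans_le ht)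
    have hG_empty : {v | t < G v} = ∅ :=
      eq_empty_of_forall_notMem fun v hv => (hv.trans_le (le_iSup G v)).not_ge (hG₁.trans_le ht)
    simp [hF_empty, hG_empty]

theorem add_lintegral_le_lintegral_of_iSup_eq_one (hp : 0 < p) (hq : 0 < q) (hpq : p + q = 1)
    (hF : Measurable F) (hG : Measurable G) (hh : Measurable h) (hF₁ : ⨆ u, F u = 1)
    (hG₁ : ⨆ v, G v = 1) (H : ∀ u v, F u ^ p * G v ^ q ≤ h (p * u + q * v)) :
    ENNReal.ofReal p * (∫⁻ u, F u) + ENNReal.ofReal q * ∫⁻ v, G v ≤ ∫⁻ w, h w := by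
  rw [lintegral_eq_lintegral_measure_ofReal_lt volume hF,
    lintegral_eq_lintegral_measure_ofReal_lt volume hG,
    lintegral_eq_lintegral_measure_ofReal_lt volume hh,
    ← lintegral_const_mul' _ _ ofReal_ne_top, ← lintegral_const_mul' _ _ ofReal_ne_top]
  exact (le_lintegral_add _ _).trans (lintegral_mono fun _ =>
    add_volume_superlevel_le_of_iSup_eq_one hp hq hpq hF hG hF₁ hG₁ H _)

theorem prekopa_leindler_of_iSup_ne_top (hp : 0 < p) (hq : 0 < q) (hpq : p + q = 1)
    (hF : Measurable F) (hG : Measurable G) (hh : Measurable h) (hFb : ⨆ u, F u ≠ ∞)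
    (hGb : ⨆ v, G v ≠ ∞) (H : ∀ u v, F u ^ p * G v ^ q ≤ h (p * u + q * v)) :
    (∫⁻ u, F u) ^ p * (∫⁻ v, G v) ^ q ≤ ∫⁻ w, h w := by
  set a := ⨆ u, F u with ha
  set b := ⨆ v, G v with hb
  rcases eq_or_ne a 0 with ha₀ | ha₀
  · simp [iSup_eq_zero.1 (ha.symm.trans ha₀), hp]
  rcases eq_or_ne b 0 with hb₀ | hb₀
  · simp [iSup_eq_zero.1 (hb.symm.trans hb₀), hq]
  have hc₀ : a ^ p * b ^ q ≠ 0 := by simp [ha₀, hb₀, hFb, hGb]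
  have hc : a ^ p * b ^ q ≠ ∞ := by finiteness
  have hscaled := add_lintegral_le_lintegral_of_iSup_eq_one hp hq hpq (hF.div_const a)
    (hG.div_const b) (hh.div_const (a ^ p * b ^ q))
    (by rw [← ENNReal.iSup_div, ENNReal.div_self ha₀ hFb])
    (by rw [← ENNReal.iSup_div, ENNReal.div_self hb₀ hGb]) fun u v => by
      rw [ENNReal.div_rpow_of_nonneg _ _ hp.le, ENNReal.div_rpow_of_nonneg _ _ hq.le,
        ← ENNReal.mul_div_mul_comm (.inr (by finiteness)) (.inl (by finiteness))]
      gcongr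
      exact H u v
  simp only [div_eq_mul_inv, lintegral_mul_const _ hF, lintegral_mul_const _ hG,
    lintegral_mul_const _ hh] at hscaled
  simp only [← div_eq_mul_inv] at hscaled
  have hgm := (rpow_mul_rpow_le_ofReal_mul_add hp hq hpq _ _).trans hscaled
  rwa [ENNReal.div_rpow_of_nonneg _ _ hp.le, ENNReal.div_rpow_of_nonneg _ _ hq.le,
    ← ENNReal.mul_div_mul_comm (.inr (by finiteness)) (.inl (by finiteness)),
    ENNReal.div_le_iff hc₀ hc, ENNReal.div_mul_cancel hc₀ hc] at hgm

theorem lintegral_eq_iSup_lintegral_min_natCast {α : Type*} [MeasurableSpace α] {μ : Measure α}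
    {f : α → ℝ≥0∞} (hf : Measurable f) : ∫⁻ x, f x ∂μ = ⨆ k : ℕ, ∫⁻ x, min (f x) k ∂μ := by
  rw [← lintegral_iSup (fun k => hf.min measurable_const)
    fun k l hkl x => by dsimp only; gcongr]
  refine lintegral_congr fun x => ?_
  change f x = ⨆ k : ℕ, f x ⊓ (k : ℝ≥0∞)
  rw [← inf_iSup_eq, ENNReal.iSup_natCast, inf_top_eq]

theorem prekopa_leindler (hp : 0 < p) (hq : 0 < q) (hpq : p + q = 1)
    (hF : Measurable F) (hG : Measurable G) (hh : Measurable h)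
    (H : ∀ u v, F u ^ p * G v ^ q ≤ h (p * u + q * v)) :
    (∫⁻ u, F u) ^ p * (∫⁻ v, G v) ^ q ≤ ∫⁻ w, h w := by
  have hbdd : ∀ (φ : ℝ → ℝ≥0∞) (k : ℕ), ⨆ x, min (φ x) k ≠ ∞ := fun φ k =>
    ne_top_of_le_ne_top (natCast_ne_top k) (iSup_le fun x => min_le_right _ _)
  rw [lintegral_eq_iSup_lintegral_min_natCast hF, lintegral_eq_iSup_lintegral_min_natCast hG,
    ← ENNReal.orderIsoRpow_apply p hp, ← ENNReal.orderIsoRpow_apply q hq, OrderIso.map_iSup,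
    OrderIso.map_iSup, ENNReal.iSup_mul]
  refine iSup_le fun k => ?_
  rw [ENNReal.mul_iSup]
  refine iSup_le fun l => ?_
  refine prekopa_leindler_of_iSup_ne_top hp hq hpq (hF.min measurable_const)
    (hG.min measurable_const) hh (hbdd F k) (hbdd G l) fun u v => ?_
  exact (H u v).trans' (by gcongr <;> exact min_le_left _ _)

theorem lintegral_Ioi_eq_lintegral_exp (φ : ℝ → ℝ≥0∞) :
    ∫⁻ s in Ioi 0, φ s = ∫⁻ u, ENNReal.ofReal (Real.exp u) * φ (Real.exp u) := by
  have := lintegral_image_eq_lintegral_abs_deriv_mul (s := univ) (f := Real.exp)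
    (f' := Real.exp) MeasurableSet.univ
    (fun x _ => (Real.hasDerivAt_exp x).hasDerivWithinAt) Real.exp_injective.injOn φ
  simpa [image_univ, Real.range_exp] using this

theorem prekopa_leindler_Ioi (hp : 0 < p) (hq : 0 < q) (hpq : p + q = 1)
    (hF : Measurable F) (hG : Measurable G) (hh : Measurable h)
    (H : ∀ s t, 0 < s → 0 < t → F s ^ p * G t ^ q ≤ h (s ^ p * t ^ q)) :
    (∫⁻ s in Ioi 0, F s) ^ p * (∫⁻ t in Ioi 0, G t) ^ q ≤ ∫⁻ r in Ioi 0, h r := by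
  simp_rw [lintegral_Ioi_eq_lintegral_exp]
  refine prekopa_leindler hp hq hpq (by fun_prop) (by fun_prop) (by fun_prop) fun u v => ?_
  have hexp : Real.exp u ^ p * Real.exp v ^ q = Real.exp (p * u + q * v) := by
    rw [← Real.exp_mul, ← Real.exp_mul, ← Real.exp_add, mul_comm u, mul_comm v]
  calc (ENNReal.ofReal (Real.exp u) * F (Real.exp u)) ^ p *
        (ENNReal.ofReal (Real.exp v) * G (Real.exp v)) ^ q
      = ENNReal.ofReal (Real.exp u ^ p * Real.exp v ^ q) *
          (F (Real.exp u) ^ p * G (Real.exp v) ^ q) := by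
        rw [ENNReal.mul_rpow_of_nonneg _ _ hp.le, ENNReal.mul_rpow_of_nonneg _ _ hq.le,
          ENNReal.ofReal_rpow_of_pos (Real.exp_pos u), ENNReal.ofReal_rpow_of_pos (Real.exp_pos v),
          mul_mul_mul_comm, ENNReal.ofReal_mul (by positivity)]
    _ ≤ ENNReal.ofReal (Real.exp (p * u + q * v)) * h (Real.exp (p * u + q * v)) := by
        rw [← hexp]
        gcongr
        exact H _ _ (Real.exp_pos u) (Real.exp_pos v)

end PrekopaLeindler

section HalfLine

theorem lintegral_Ioi_exp_neg_sq :
    ∫⁻ s in Ioi (0 : ℝ), ENNReal.ofReal (Real.exp (-s ^ 2 / 2)) =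
      ENNReal.ofReal √(Real.pi / 2) := by
  have hexponent : ∀ s : ℝ, -s ^ 2 / 2 = -(1 / 2) * s ^ 2 := fun s => by ring
  simp_rw [hexponent]
  rw [← ofReal_integral_eq_lintegral_ofReal
    (integrable_exp_neg_mul_sq (by norm_num)).integrableOn
    (.of_forall fun s => (Real.exp_pos _).le), integral_gaussian_Ioi]
  congr 1
  rw [show Real.pi / (1 / 2) = Real.pi / 2 * 2 ^ 2 by ring, Real.sqrt_mul' _ (by positivity),
    Real.sqrt_sq (by norm_num)]
  ring

theorem lintegral_Ioi_mul_lintegral_Ioi_le {f g : ℝ → ℝ≥0∞} (hf : Measurable f)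
    (hg : Measurable g) {C : ℝ≥0∞}
    (H : ∀ s t, 0 < s → 0 < t → f s * g t ≤ C * ENNReal.ofReal (Real.exp (-(s * t)))) :
    (∫⁻ s in Ioi 0, f s) * ∫⁻ t in Ioi 0, g t ≤ C * ENNReal.ofReal (Real.pi / 2) := by
  have hhalf : (0 : ℝ) ≤ 1 / 2 := by norm_num
  have hroot : ∀ s t, 0 < s → 0 < t → f s ^ (1 / 2 : ℝ) * g t ^ (1 / 2 : ℝ) ≤
      C ^ (1 / 2 : ℝ) * ENNReal.ofReal
        (Real.exp (-(s ^ (1 / 2 : ℝ) * t ^ (1 / 2 : ℝ)) ^ 2 / 2)) := by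
    intro s t hs ht
    have hsq : (s ^ (1 / 2 : ℝ) * t ^ (1 / 2 : ℝ)) ^ 2 = s * t := by
      rw [← Real.sqrt_eq_rpow, ← Real.sqrt_eq_rpow, mul_pow, Real.sq_sqrt hs.le,
        Real.sq_sqrt ht.le]
    rw [← ENNReal.mul_rpow_of_nonneg _ _ hhalf, hsq, div_eq_mul_one_div (-_), Real.exp_mul,
      ← ENNReal.ofReal_rpow_of_pos (Real.exp_pos _), ← ENNReal.mul_rpow_of_nonneg _ _ hhalf]
    exact ENNReal.rpow_le_rpow (H s t hs ht) hhalf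
  have hpl := prekopa_leindler_Ioi (p := 1 / 2) (q := 1 / 2) (by norm_num) (by norm_num)
    (by norm_num) hf hg (by fun_prop)
    (h := fun r => C ^ (1 / 2 : ℝ) * ENNReal.ofReal (Real.exp (-r ^ 2 / 2))) hroot
  rwa [lintegral_const_mul _ (by fun_prop), lintegral_Ioi_exp_neg_sq, Real.sqrt_eq_rpow,
    ← ENNReal.ofReal_rpow_of_pos (by positivity), ← ENNReal.mul_rpow_of_nonneg _ _ hhalf,
    ← ENNReal.mul_rpow_of_nonneg _ _ hhalf, ENNReal.rpow_le_rpow_iff (by norm_num)] at hpl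

end HalfLine

section Measure

variable {α β : Type*} [MeasurableSpace α] [MeasurableSpace β] {μ : Measure α} {ν : Measure β}

theorem withDensity_comp_eq_map {T : α → β} {S : β → α} (hT : MeasurePreserving T μ ν)
    (hS : Measurable S) (hST : Function.LeftInverse S T) {f : β → ℝ≥0∞} (hf : Measurable f) :
    μ.withDensity (fun a => f (T a)) = (ν.withDensity f).map S := by
  ext U hU
  rw [Measure.map_apply hS hU, withDensity_apply _ hU, withDensity_apply _ (hS hU),
    ← hT.setLIntegral_comp_preimage (hS hU) hf, ← preimage_comp, hST.comp_eq_id, preimage_id]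

theorem withDensity_lintegral_fst [SFinite μ] [SFinite ν] {f : α × β → ℝ≥0∞}
    (hf : Measurable f) :
    ν.withDensity (fun y => ∫⁻ x, f (x, y) ∂μ) = ((μ.prod ν).withDensity f).snd := by
  ext U hU
  rw [Measure.snd_apply hU, withDensity_apply _ hU, withDensity_apply _ (measurable_snd hU),
    ← univ_prod, ← Measure.prod_restrict, Measure.restrict_univ,
    lintegral_prod_symm _ hf.aemeasurable]

theorem prod_restrict_fst_preimage [SFinite μ] [SFinite ν] (s : Set α) :
    (μ.prod ν).restrict (Prod.fst ⁻¹' s) = (μ.restrict s).prod ν := by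
  rw [← prod_univ, ← Measure.prod_restrict, Measure.restrict_univ]

theorem lintegral_eq_setLIntegral_fst_Ioi_add_Iio (a : ℝ) (h : ℝ × β → ℝ≥0∞) :
    ∫⁻ p, h p ∂(volume.prod ν) = (∫⁻ p in Prod.fst ⁻¹' Ioi a, h p ∂(volume.prod ν)) +
      ∫⁻ p in Prod.fst ⁻¹' Iio a, h p ∂(volume.prod ν) := by
  have hae : (Prod.fst ⁻¹' Iio a : Set (ℝ × β)) =ᵐ[volume.prod ν] Prod.fst ⁻¹' Iic a :=
    Measure.quasiMeasurePreserving_fst.preimage_ae_eq Iio_ae_eq_Iic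
  rw [setLIntegral_congr hae, ← compl_Ioi, preimage_compl,
    lintegral_add_compl _ (measurable_fst measurableSet_Ioi)]

end Measure

/-- A measure is centered if it has a first moment and its barycenter is the origin. -/
structure IsCentered {E : Type*} [NormedAddCommGroup E] [NormedSpace ℝ E] [MeasurableSpace E]
    (μ : Measure E) : Prop where
  integrable_id : Integrable (fun x => x) μ
  integral_eq_zero : ∫ x, x ∂μ = 0

theorem isCentered_map_iff {α E : Type*} [MeasurableSpace α] [NormedAddCommGroup E]
    [NormedSpace ℝ E] [MeasurableSpace E] [BorelSpace E] [SecondCountableTopology E]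
    {μ : Measure α} {T : α → E} (hT : AEMeasurable T μ) :
    IsCentered (μ.map T) ↔ Integrable T μ ∧ ∫ a, T a ∂μ = 0 := by
  have hid : AEStronglyMeasurable (fun x : E => x) (μ.map T) :=
    measurable_id.aestronglyMeasurable
  have hint := integrable_map_measure hid hT
  have hval := integral_map hT hid
  exact ⟨fun h => ⟨hint.1 h.1, hval.symm.trans h.2⟩, fun h => ⟨hint.2 h.1, hval.trans h.2⟩⟩

/-- A measure on `ℝ × E` is balanced if the hyperplane `{0} × E` splits it into two halves of
equal mass whose marginals on `E` are both centered. -/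
structure IsBalanced {E : Type*} [NormedAddCommGroup E] [NormedSpace ℝ E] [MeasurableSpace E]
    (μ : Measure (ℝ × E)) : Prop where
  measure_Ioi_eq : μ (Prod.fst ⁻¹' Ioi 0) = μ (Prod.fst ⁻¹' Iio 0)
  isCentered_Ioi : IsCentered (μ.restrict (Prod.fst ⁻¹' Ioi 0)).snd
  isCentered_Iio : IsCentered (μ.restrict (Prod.fst ⁻¹' Iio 0)).snd

section Shear

variable {V : Type*} [AddCommGroup V] [Module ℝ V]

/-- The volume-preserving map `(s, y) ↦ (m + s, z + y + s • v)`, a change of variables carrying the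
axis of the first coordinate to the line through `(m, z)` with direction `(1, v)`. -/
def shear (m : ℝ) (z v : V) (p : ℝ × V) : ℝ × V :=
  (m + p.1, z + p.2 + p.1 • v)

/-- The inverse of `shear`. -/
def unshear (m : ℝ) (z v : V) (p : ℝ × V) : ℝ × V :=
  (p.1 - m, p.2 - z - (p.1 - m) • v)

theorem leftInverse_unshear_shear (m : ℝ) (z v : V) :
    Function.LeftInverse (unshear m z v) (shear m z v) := fun p => by
  simp only [shear, unshear, add_sub_cancel_left, Prod.ext_iff, true_and]
  abel

variable {E : Type*} [NormedAddCommGroup E] [InnerProductSpace ℝ E]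

/-- The shear of the dual variable adjoint to the linear part of `shear m z v`. -/
def dualShear (v : E) (q : ℝ × E) : ℝ × E :=
  (q.1 - ⟪v, q.2⟫, q.2)

variable (m : ℝ) (z v : E) [FiniteDimensional ℝ E] [MeasurableSpace E] [BorelSpace E]

@[fun_prop]
theorem measurable_unshear : Measurable (unshear m z v) := by
  unfold unshear
  fun_prop

theorem measurePreserving_shear : MeasurePreserving (shear m z v) :=
  (measurePreserving_add_left volume m).skew_product (g := fun s y => z + y + s • v) (by fun_prop)
    (.of_forall fun s => by
      simpa only [add_right_comm] using (measurePreserving_add_left volume (z + s • v)).map_eq)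

theorem measurePreserving_dualShear : MeasurePreserving (dualShear v) := by
  have hskew : MeasurePreserving fun q : E × ℝ => (q.1, q.2 - ⟪v, q.1⟫) :=
    (MeasurePreserving.id volume).skew_product (g := fun y t => t - ⟪v, y⟫) (by fun_prop)
      (.of_forall fun y => (measurePreserving_sub_right volume ⟪v, y⟫).map_eq)
  exact (Measure.measurePreserving_swap.comp hskew).comp Measure.measurePreserving_swap

end Shear

section Santalo

variable {E : Type*} [NormedAddCommGroup E] [InnerProductSpace ℝ E] [FiniteDimensional ℝ E]
  [MeasurableSpace E] [BorelSpace E]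

/-- A Santaló point of `f` is a center `z` such that `f (z + ·)` satisfies the functional
Blaschke–Santaló inequality against every function dual to it. -/
def IsSantaloPoint (f : E → ℝ≥0∞) (z : E) : Prop :=
  ∀ ⦃g : E → ℝ≥0∞⦄, Measurable g → ∀ ⦃C : ℝ≥0∞⦄,
    (∀ x y, f (z + x) * g y ≤ C * ENNReal.ofReal (Real.exp (-⟪x, y⟫))) →
      (∫⁻ x, f x) * ∫⁻ y, g y ≤ C * ENNReal.ofReal (2 * Real.pi) ^ finrank ℝ E

variable (E) in
/-- The functional Blaschke–Santaló inequality on `E`: the origin is a Santaló point of every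
integrable function with barycenter at the origin. -/
def SantaloInequality : Prop :=
  ∀ ⦃f : E → ℝ≥0∞⦄, Measurable f → ∫⁻ x, f x ≠ ∞ → IsCentered (volume.withDensity f) →
    IsSantaloPoint f 0

variable {f g : ℝ × E → ℝ≥0∞} {C : ℝ≥0∞} {m : ℝ} {z v : E}

theorem setLIntegral_fst_Ioi_mul_le (hE : SantaloInequality E) (hf : Measurable f)
    (hg : Measurable g) (hfin : ∫⁻ p, f p ≠ ∞)
    (hcent : IsCentered ((volume.withDensity f).restrict (Prod.fst ⁻¹' Ioi 0)).snd)
    (H : ∀ p q, f p * g q ≤ C * ENNReal.ofReal (Real.exp (-(p.1 * q.1 + ⟪p.2, q.2⟫)))) :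
    (∫⁻ p in Prod.fst ⁻¹' Ioi 0, f p) * ∫⁻ q in Prod.fst ⁻¹' Ioi 0, g q ≤
      C * ENNReal.ofReal (Real.pi / 2) * ENNReal.ofReal (2 * Real.pi) ^ finrank ℝ E := by
  have hmarginal : ∀ {φ : ℝ × E → ℝ≥0∞}, Measurable φ →
      ∫⁻ p in Prod.fst ⁻¹' Ioi 0, φ p = ∫⁻ y, ∫⁻ s in Ioi 0, φ (s, y) := fun hφ => by
    rw [Measure.volume_eq_prod, prod_restrict_fst_preimage, lintegral_prod_symm _ hφ.aemeasurable]
  have hfin' := ne_top_of_le_ne_top hfin (setLIntegral_le_lintegral (Prod.fst ⁻¹' Ioi 0) f)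
  rw [hmarginal hf] at hfin' ⊢
  rw [hmarginal hg]
  refine hE hf.lintegral_prod_left' hfin' ?_ hg.lintegral_prod_left' fun y y' => ?_
  · rwa [withDensity_lintegral_fst hf, ← prod_restrict_fst_preimage,
      ← restrict_withDensity (measurable_fst measurableSet_Ioi)]
  · rw [zero_add, mul_right_comm]
    refine lintegral_Ioi_mul_lintegral_Ioi_le (by fun_prop) (by fun_prop) fun s t _ _ => ?_
    refine (H (s, y) (t, y')).trans_eq ?_
    rw [mul_assoc, ← ENNReal.ofReal_mul (by positivity), ← Real.exp_add]
    congr 3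
    ring

theorem setLIntegral_fst_Iio_mul_le (hE : SantaloInequality E) (hf : Measurable f)
    (hg : Measurable g) (hfin : ∫⁻ p, f p ≠ ∞)
    (hcent : IsCentered ((volume.withDensity f).restrict (Prod.fst ⁻¹' Iio 0)).snd)
    (H : ∀ p q, f p * g q ≤ C * ENNReal.ofReal (Real.exp (-(p.1 * q.1 + ⟪p.2, q.2⟫)))) :
    (∫⁻ p in Prod.fst ⁻¹' Iio 0, f p) * ∫⁻ q in Prod.fst ⁻¹' Iio 0, g q ≤
      C * ENNReal.ofReal (Real.pi / 2) * ENNReal.ofReal (2 * Real.pi) ^ finrank ℝ E := by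
  set R : ℝ × E → ℝ × E := Prod.map Neg.neg id
  have hRmp : MeasurePreserving R := (Measure.measurePreserving_neg volume).prod (.id volume)
  have hRR : Function.LeftInverse R R := fun p => Prod.ext (neg_neg p.1) rfl
  have hRneg : R ⁻¹' (Prod.fst ⁻¹' Iio 0) = Prod.fst ⁻¹' Ioi 0 := by ext p; simp [R]
  have hRpos : R ⁻¹' (Prod.fst ⁻¹' Ioi 0) = Prod.fst ⁻¹' Iio 0 := by ext p; simp [R]
  have hneg : MeasurableSet (Prod.fst ⁻¹' Iio (0 : ℝ) : Set (ℝ × E)) :=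
    measurable_fst measurableSet_Iio
  rw [← hRmp.setLIntegral_comp_preimage hneg hf, ← hRmp.setLIntegral_comp_preimage hneg hg, hRneg]
  refine setLIntegral_fst_Ioi_mul_le hE (hf.comp hRmp.measurable) (hg.comp hRmp.measurable)
    (by rwa [← hRmp.lintegral_comp hf] at hfin) ?_ fun p q => by simpa [R] using H (R p) (R q)
  rwa [withDensity_comp_eq_map hRmp hRmp.measurable hRR hf,
    Measure.restrict_map hRmp.measurable (measurable_fst measurableSet_Ioi), hRpos, Measure.snd,
    Measure.map_map measurable_snd hRmp.measurable]

theorem lintegral_mul_lintegral_le_of_isBalanced (hE : SantaloInequality E) (hf : Measurable f)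
    (hg : Measurable g) (hfin : ∫⁻ p, f p ≠ ∞) (hbal : IsBalanced (volume.withDensity f))
    (H : ∀ p q, f p * g q ≤ C * ENNReal.ofReal (Real.exp (-(p.1 * q.1 + ⟪p.2, q.2⟫)))) :
    (∫⁻ p, f p) * ∫⁻ q, g q ≤ C * ENNReal.ofReal (2 * Real.pi) ^ (finrank ℝ E + 1) := by
  have hhalf : ∫⁻ p in Prod.fst ⁻¹' Ioi 0, f p = ∫⁻ p in Prod.fst ⁻¹' Iio 0, f p := by
    rw [← withDensity_apply _ (measurable_fst measurableSet_Ioi), hbal.measure_Ioi_eq,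
      withDensity_apply _ (measurable_fst measurableSet_Iio)]
  have hright := setLIntegral_fst_Ioi_mul_le hE hf hg hfin hbal.isCentered_Ioi H
  have hleft := setLIntegral_fst_Iio_mul_le hE hf hg hfin hbal.isCentered_Iio H
  have hπ : ENNReal.ofReal (2 * Real.pi) = 4 * ENNReal.ofReal (Real.pi / 2) := by
    rw [← ENNReal.ofReal_ofNat 4, ← ENNReal.ofReal_mul (by norm_num)]
    ring_nf
  rw [← hhalf] at hleft
  set K := C * ENNReal.ofReal (Real.pi / 2) * ENNReal.ofReal (2 * Real.pi) ^ finrank ℝ E with hK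
  set I := ∫⁻ p in Prod.fst ⁻¹' Ioi 0, f p
  set J := ∫⁻ q in Prod.fst ⁻¹' Ioi 0, g q
  set J' := ∫⁻ q in Prod.fst ⁻¹' Iio 0, g q
  calc (∫⁻ p, f p) * ∫⁻ q, g q = (I + I) * (J + J') := by
        rw [Measure.volume_eq_prod, lintegral_eq_setLIntegral_fst_Ioi_add_Iio 0,
          lintegral_eq_setLIntegral_fst_Ioi_add_Iio 0, ← Measure.volume_eq_prod, ← hhalf]
    _ = 2 * (I * J + I * J') := by ring
    _ ≤ 2 * (K + K) := by gcongr
    _ = C * ENNReal.ofReal (2 * Real.pi) ^ (finrank ℝ E + 1) := by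
        rw [pow_succ (ENNReal.ofReal (2 * Real.pi)), hK]
        nth_rw 4 [hπ]
        ring

theorem lintegral_mul_lintegral_le_of_isBalanced_map_unshear (hE : SantaloInequality E)
    (hf : Measurable f) (hg : Measurable g) (hfin : ∫⁻ p, f p ≠ ∞)
    (hbal : IsBalanced ((volume.withDensity f).map (unshear m z v)))
    (H : ∀ p q, f ((m, z) + p) * g q ≤
      C * ENNReal.ofReal (Real.exp (-(p.1 * q.1 + ⟪p.2, q.2⟫)))) :
    (∫⁻ p, f p) * ∫⁻ q, g q ≤ C * ENNReal.ofReal (2 * Real.pi) ^ (finrank ℝ E + 1) := by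
  have hS := measurePreserving_shear m z v
  have hD := measurePreserving_dualShear v
  rw [← hS.lintegral_comp hf] at hfin ⊢
  rw [← hD.lintegral_comp hg]
  refine lintegral_mul_lintegral_le_of_isBalanced hE (hf.comp hS.measurable)
    (hg.comp hD.measurable) hfin ?_ fun p q => ?_
  · rwa [withDensity_comp_eq_map hS (by fun_prop) (leftInverse_unshear_shear m z v) hf]
  · have hpq := H (p.1, p.2 + p.1 • v) (dualShear v q)
    simp only [Prod.mk_add_mk, ← add_assoc] at hpq
    refine hpq.trans_eq ?_
    simp only [dualShear, inner_add_left, real_inner_smul_left]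
    ring_nf

theorem continuous_measureReal_Iic (ν : Measure ℝ) [IsFiniteMeasure ν] [NullSingletonClass ν] :
    Continuous fun m => ν.real (Iic m) := by
  have hprimitive : Continuous fun m => ∫ _ in (0 : ℝ)..m, (1 : ℝ) ∂ν :=
    (integrable_const (1 : ℝ)).continuous_primitive 0
  refine (hprimitive.add (continuous_const (y := ν.real (Iic 0)))).congr fun m => ?_
  dsimp only [Pi.add_apply]
  rw [← intervalIntegral.integral_Iic_sub_Iic (integrable_const _).integrableOn
    (integrable_const _).integrableOn]
  simp

theorem exists_measure_Ioi_eq_measure_Iio (ν : Measure ℝ) [IsFiniteMeasure ν]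
    [NullSingletonClass ν] : ∃ m, ν (Ioi m) = ν (Iio m) := by
  rcases eq_or_ne ν 0 with rfl | hν
  · exact ⟨0, rfl⟩
  have hmass : 0 < ν.real univ := by
    simpa [Measure.real, ENNReal.toReal_pos_iff, pos_iff_ne_zero] using hν
  have hcompl : ∀ m, ν.real (Iic m) + ν.real (Ioi m) = ν.real univ := fun m => by
    rw [← compl_Iic]
    exact measureReal_add_measureReal_compl measurableSet_Iic
  have htop : Filter.Tendsto (fun m => ν.real (Iic m)) Filter.atTop (nhds (ν.real univ)) :=
    (ENNReal.tendsto_toReal (measure_ne_top _ _)).comp (tendsto_measure_Iic_atTop ν)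
  have hbot : Filter.Tendsto (fun m => ν.real (Ioi m)) Filter.atBot (nhds (ν.real univ)) := by
    simp_rw [measureReal_congr (Ioi_ae_eq_Ici (μ := ν))]
    exact (ENNReal.tendsto_toReal (measure_ne_top _ _)).comp (tendsto_measure_Ici_atBot ν)
  obtain ⟨a, ha⟩ := (hbot.eventually (lt_mem_nhds (half_lt_self hmass))).exists
  obtain ⟨b, hb⟩ := (htop.eventually (lt_mem_nhds (half_lt_self hmass))).exists
  obtain ⟨m, hm⟩ := mem_range_of_exists_le_of_exists_ge (continuous_measureReal_Iic ν)
    (c := ν.real univ / 2) ⟨a, by linarith [hcompl a]⟩ ⟨b, hb.le⟩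
  have hreal : ν.real (Ioi m) = ν.real (Iic m) := by linarith [hcompl m]
  refine ⟨m, ?_⟩
  rw [measure_congr Iio_ae_eq_Iic]
  exact (measureReal_eq_measureReal_iff).1 hreal

theorem exists_smul_add_smul_eq {K V : Type*} [Field K] [AddCommGroup V] [Module K V] {a b c : K}
    (ha : a ≠ 0) (hbc : b ≠ c) (x y : V) : ∃ z v : V, a • z + b • v = x ∧ a • z + c • v = y := by
  set v : V := (b - c)⁻¹ • (x - y) with hv
  have hsub : b • v - c • v = x - y := by
    rw [← sub_smul, hv, smul_inv_smul₀ (sub_ne_zero.2 hbc)]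
  refine ⟨a⁻¹ • (x - b • v), v, ?_, ?_⟩ <;> rw [smul_inv_smul₀ ha]
  · abel
  · rw [← sub_eq_zero, ← sub_sub_self x y, ← hsub]
    abel

section Balancing

variable {μ : Measure (ℝ × E)} [IsFiniteMeasure μ]

theorem isCentered_snd_restrict_map_unshear (hμ : Integrable (fun p => p) μ) {s : Set ℝ}
    (hs : MeasurableSet s) {T : Set (ℝ × E)} (hT : unshear m z v ⁻¹' (Prod.fst ⁻¹' s) = T)
    (h : μ.real T • z + (∫ p in T, (p.1 - m) ∂μ) • v = ∫ p in T, p.2 ∂μ) :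
    IsCentered ((μ.map (unshear m z v)).restrict (Prod.fst ⁻¹' s)).snd := by
  have hfst : Integrable (fun p : ℝ × E => p.1 - m) (μ.restrict T) :=
    (hμ.fst.sub (integrable_const m)).integrableOn
  have hsnd : Integrable (fun p : ℝ × E => p.2) (μ.restrict T) := hμ.snd.integrableOn
  rw [Measure.restrict_map (by fun_prop) (measurable_fst hs), hT, Measure.snd,
    Measure.map_map measurable_snd (by fun_prop), isCentered_map_iff (by fun_prop)]
  change Integrable (fun p : ℝ × E => p.2 - z - (p.1 - m) • v) _ ∧
    ∫ p in T, (p.2 - z - (p.1 - m) • v) ∂μ = 0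
  have hsub := hsnd.sub (integrable_const z)
  refine ⟨hsub.sub (hfst.smul_const v), ?_⟩
  rw [integral_sub (f := fun p => p.2 - z) hsub (hfst.smul_const v),
    integral_sub hsnd (integrable_const z), integral_smul_const, setIntegral_const, ← h]
  abel

theorem exists_isBalanced_map_unshear (hμ : Integrable (fun p => p) μ)
    [NullSingletonClass (μ.map Prod.fst)] :
    ∃ m z v, IsBalanced (μ.map (unshear m z v)) := by
  obtain ⟨m, hm⟩ := exists_measure_Ioi_eq_measure_Iio (μ.map Prod.fst)
  rw [Measure.map_apply measurable_fst measurableSet_Ioi,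
    Measure.map_apply measurable_fst measurableSet_Iio] at hm
  set P : Set (ℝ × E) := Prod.fst ⁻¹' Ioi m
  set N : Set (ℝ × E) := Prod.fst ⁻¹' Iio m
  have hP : MeasurableSet P := measurable_fst measurableSet_Ioi
  have hpre : ∀ z v : E, unshear m z v ⁻¹' (Prod.fst ⁻¹' Ioi 0) = P ∧
      unshear m z v ⁻¹' (Prod.fst ⁻¹' Iio 0) = N := fun z v => by
    constructor <;> ext p <;> simp [unshear, P, N]
  obtain ⟨z, v, hzP, hzN⟩ : ∃ z v : E,
      μ.real P • z + (∫ p in P, (p.1 - m) ∂μ) • v = ∫ p in P, p.2 ∂μ ∧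
        μ.real P • z + (∫ p in N, (p.1 - m) ∂μ) • v = ∫ p in N, p.2 ∂μ := by
    rcases eq_or_ne (μ P) 0 with hP₀ | hP₀
    · refine ⟨0, 0, ?_⟩
      simp [Measure.restrict_eq_zero.2 hP₀, Measure.restrict_eq_zero.2 (hm.symm.trans hP₀)]
    have hfst : Integrable (fun p : ℝ × E => p.1 - m) μ := hμ.fst.sub (integrable_const m)
    have hpos : 0 < ∫ p in P, (p.1 - m) ∂μ := by
      refine (setIntegral_pos_iff_support_of_nonneg_ae ?_ hfst.integrableOn).2 ?_
      · exact (ae_restrict_mem hP).mono fun p hp => sub_nonneg.2 (le_of_lt hp)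
      · exact (pos_iff_ne_zero.2 hP₀).trans_le
          (measure_mono fun p hp => ⟨(sub_pos.2 hp).ne', hp⟩)
    have hneg : ∫ p in N, (p.1 - m) ∂μ ≤ 0 :=
      setIntegral_nonpos (measurable_fst measurableSet_Iio) fun p hp => sub_nonpos.2 (le_of_lt hp)
    exact exists_smul_add_smul_eq (ENNReal.toReal_ne_zero.2 ⟨hP₀, measure_ne_top _ _⟩)
      (hneg.trans_lt hpos).ne' _ _
  refine ⟨m, z, v, ?_, isCentered_snd_restrict_map_unshear hμ measurableSet_Ioi (hpre z v).1 hzP,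
    isCentered_snd_restrict_map_unshear hμ measurableSet_Iio (hpre z v).2 ?_⟩
  · rw [Measure.map_apply (by fun_prop) (measurable_fst measurableSet_Ioi),
      Measure.map_apply (by fun_prop) (measurable_fst measurableSet_Iio), (hpre z v).1,
      (hpre z v).2, hm]
  · rwa [measureReal_def, ← hm, ← measureReal_def]

end Balancing

theorem nullSingletonClass_map_fst {α β : Type*} [MeasurableSpace α] [MeasurableSingletonClass α]
    [MeasurableSpace β] {μ : Measure α} [NullSingletonClass μ] {ν : Measure β} [SFinite ν]
    {ρ : Measure (α × β)} (hρ : ρ ≪ μ.prod ν) : NullSingletonClass (ρ.map Prod.fst) where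
  measure_singleton a := by
    rw [Measure.map_apply measurable_fst (measurableSet_singleton a)]
    refine hρ ?_
    rw [← prod_univ, Measure.prod_prod, measure_singleton, zero_mul]

theorem SantaloInequality.exists_isSantaloPoint (hE : SantaloInequality E)
    {f : WithLp 2 (ℝ × E) → ℝ≥0∞} (hf : Measurable f) (hfin : ∫⁻ x, f x ≠ ∞)
    (hint : Integrable (fun x => x) (volume.withDensity f)) : ∃ w, IsSantaloPoint f w := by
  have hto : MeasurePreserving (WithLp.toLp 2 : ℝ × E → WithLp 2 (ℝ × E)) :=
    WithLp.volume_preserving_toLp ℝ E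
  have hof : Measurable (WithLp.ofLp : WithLp 2 (ℝ × E) → ℝ × E) := by fun_prop
  set f' : ℝ × E → ℝ≥0∞ := fun p => f (WithLp.toLp 2 p)
  have hf' : Measurable f' := hf.comp hto.measurable
  rw [← hto.lintegral_comp hf] at hfin
  have : IsFiniteMeasure (volume.withDensity f') := isFiniteMeasure_withDensity hfin
  have : NullSingletonClass ((volume.withDensity f').map Prod.fst) :=
    nullSingletonClass_map_fst (withDensity_absolutelyContinuous _ _)
  have hint' : Integrable (fun p => p) (volume.withDensity f') := by
    rw [withDensity_comp_eq_map hto hof (fun _ => rfl) hf,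
      integrable_map_measure (by fun_prop) hof.aemeasurable]
    exact (WithLp.prodContinuousLinearEquiv 2 ℝ ℝ E).toContinuousLinearMap.integrable_comp hint
  obtain ⟨m, z, v, hbal⟩ := exists_isBalanced_map_unshear hint'
  refine ⟨WithLp.toLp 2 (m, z), fun g hg C H => ?_⟩
  rw [← hto.lintegral_comp hf, ← hto.lintegral_comp hg]
  have hfinrank : finrank ℝ (WithLp 2 (ℝ × E)) = finrank ℝ E + 1 := by
    rw [(WithLp.linearEquiv 2 ℝ (ℝ × E)).finrank_eq, finrank_prod, finrank_self, add_comm]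
  rw [hfinrank]
  refine lintegral_mul_lintegral_le_of_isBalanced_map_unshear hE hf' (hg.comp hto.measurable) hfin
    hbal fun p q => ?_
  simpa [f', WithLp.prod_inner_apply, mul_comm] using H (WithLp.toLp 2 p) (WithLp.toLp 2 q)

theorem measure_univ_le_lintegral_exp {α : Type*} [MeasurableSpace α] (ν : Measure α)
    [IsFiniteMeasure ν] {ℓ : α → ℝ} (hℓ : Integrable ℓ ν) (h₀ : ∫ x, ℓ x ∂ν = 0) :
    ν univ ≤ ∫⁻ x, ENNReal.ofReal (Real.exp (ℓ x)) ∂ν := by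
  have hint : Integrable (fun x => 1 + ℓ x) ν := (integrable_const 1).add hℓ
  calc ν univ = ENNReal.ofReal (∫ x, (1 + ℓ x) ∂ν) := by
        rw [integral_add (integrable_const 1) hℓ, h₀]
        simp
    _ ≤ ENNReal.ofReal (∫ x, max (1 + ℓ x) 0 ∂ν) :=
        ENNReal.ofReal_le_ofReal (integral_mono hint hint.pos_part fun x => le_max_left _ _)
    _ = ∫⁻ x, ENNReal.ofReal (max (1 + ℓ x) 0) ∂ν :=
        ofReal_integral_eq_lintegral_ofReal hint.pos_part (.of_forall fun x => le_max_right _ _)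
    _ ≤ ∫⁻ x, ENNReal.ofReal (Real.exp (ℓ x)) ∂ν := by
        refine lintegral_mono fun x => ENNReal.ofReal_le_ofReal (max_le ?_ (Real.exp_pos _).le)
        linarith [Real.add_one_le_exp (ℓ x)]

theorem IsSantaloPoint.lintegral_mul_lintegral_le {f g : E → ℝ≥0∞} {w : E}
    (hw : IsSantaloPoint g w) (hf : Measurable f) (hfin : ∫⁻ x, f x ≠ ∞)
    (hcent : IsCentered (volume.withDensity f))
    (H : ∀ x y, f x * g y ≤ C * ENNReal.ofReal (Real.exp (-⟪x, y⟫))) :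
    (∫⁻ x, f x) * ∫⁻ y, g y ≤ C * ENNReal.ofReal (2 * Real.pi) ^ finrank ℝ E := by
  have : IsFiniteMeasure (volume.withDensity f) := isFiniteMeasure_withDensity hfin
  have hwm : Measurable fun x => ENNReal.ofReal (Real.exp ⟪w, x⟫) := by fun_prop
  have htilt : ∫⁻ x, f x ≤ ∫⁻ x, f x * ENNReal.ofReal (Real.exp ⟪w, x⟫) := by
    have hle := measure_univ_le_lintegral_exp _ (hcent.integrable_id.const_inner w)
      (by rw [integral_inner hcent.integrable_id, hcent.integral_eq_zero, inner_zero_right])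
    rwa [withDensity_apply _ .univ, setLIntegral_univ,
      lintegral_withDensity_eq_lintegral_mul _ hf hwm] at hle
  rw [mul_comm]
  refine (mul_le_mul_right htilt _).trans (hw (hf.mul hwm) fun y x => ?_)
  calc g (w + y) * (f x * ENNReal.ofReal (Real.exp ⟪w, x⟫))
      = f x * g (w + y) * ENNReal.ofReal (Real.exp ⟪w, x⟫) := by ring
    _ ≤ C * ENNReal.ofReal (Real.exp (-⟪x, w + y⟫)) * ENNReal.ofReal (Real.exp ⟪w, x⟫) := by
        exact mul_le_mul_left (H _ _) _
    _ = C * ENNReal.ofReal (Real.exp (-⟪y, x⟫)) := by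
        rw [mul_assoc, ← ENNReal.ofReal_mul (by positivity), ← Real.exp_add, inner_add_right,
          real_inner_comm x w, real_inner_comm x y]
        ring_nf

theorem integrable_id_withDensity_indicator_closedBall {F : Type*} [NormedAddCommGroup F]
    [MeasurableSpace F] [OpensMeasurableSpace F] [SecondCountableTopology F] {μ : Measure F}
    {g : F → ℝ≥0∞} {R : ℝ} (hfin : ∫⁻ x in Metric.closedBall 0 R, g x ∂μ ≠ ∞) :
    Integrable (fun x => x) (μ.withDensity ((Metric.closedBall 0 R).indicator g)) := by
  have hball : MeasurableSet (Metric.closedBall (0 : F) R) := measurableSet_closedBall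
  rw [withDensity_indicator hball]
  have : IsFiniteMeasure ((μ.restrict (Metric.closedBall 0 R)).withDensity g) :=
    isFiniteMeasure_withDensity hfin
  refine Integrable.of_bound (by fun_prop) R ?_
  filter_upwards [(withDensity_absolutelyContinuous _ g).ae_le (ae_restrict_mem hball)] with x hx
  exact mem_closedBall_zero_iff.1 hx

theorem setLIntegral_closedBall_ne_top_of_mul_le {f g : E → ℝ≥0∞} {a : E} (ha : f a ≠ 0)
    (hC : C ≠ ∞) (H : ∀ y, f a * g y ≤ C * ENNReal.ofReal (Real.exp (-⟪a, y⟫))) (R : ℝ) :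
    ∫⁻ y in Metric.closedBall 0 R, g y ≠ ∞ := by
  have hbound : ∀ y ∈ Metric.closedBall (0 : E) R,
      g y ≤ C * ENNReal.ofReal (Real.exp (‖a‖ * R)) / f a := fun y hy => by
    rw [ENNReal.le_div_iff_mul_le (.inl ha) (.inr (by finiteness)), mul_comm]
    refine (H y).trans ?_
    gcongr
    have hay := abs_le.1 ((abs_real_inner_le_norm a y).trans
      (mul_le_mul_of_nonneg_left (mem_closedBall_zero_iff.1 hy) (norm_nonneg a)))
    linarith [hay.1]
  refine ne_top_of_le_ne_top ?_ (setLIntegral_mono measurable_const hbound)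
  rw [setLIntegral_const]
  exact ENNReal.mul_ne_top (ENNReal.div_ne_top (by finiteness) ha)
    (isCompact_closedBall _ _).measure_ne_top

theorem lintegral_eq_iSup_setLIntegral_closedBall {α : Type*} [PseudoMetricSpace α]
    [MeasurableSpace α] (μ : Measure α) (f : α → ℝ≥0∞) (a : α) :
    ∫⁻ x, f x ∂μ = ⨆ k : ℕ, ∫⁻ x in Metric.closedBall a k, f x ∂μ := by
  rw [← setLIntegral_univ, ← Metric.iUnion_closedBall_nat a]
  refine setLIntegral_iUnion_of_directed f (Monotone.directed_le fun k l hkl => ?_)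
  exact Metric.closedBall_subset_closedBall (Nat.cast_le.2 hkl)

theorem santaloInequality_of_exists_isSantaloPoint
    (h : ∀ ⦃g : E → ℝ≥0∞⦄, Measurable g → ∫⁻ y, g y ≠ ∞ →
      Integrable (fun y => y) (volume.withDensity g) → ∃ w, IsSantaloPoint g w) :
    SantaloInequality E := by
  intro f hf hfin hcent g hg C H
  simp only [zero_add] at H
  by_cases hf₀ : ∀ x, f x = 0
  · simp [hf₀]
  obtain ⟨a, ha⟩ := not_forall.1 hf₀
  rcases eq_or_ne C ∞ with rfl | hC
  · rw [ENNReal.top_mul (by positivity)]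
    exact le_top
  rw [lintegral_eq_iSup_setLIntegral_closedBall volume g 0, ENNReal.mul_iSup]
  refine iSup_le fun k => ?_
  have hball : MeasurableSet (Metric.closedBall (0 : E) k) := measurableSet_closedBall
  have hgfin := setLIntegral_closedBall_ne_top_of_mul_le ha hC (H a) k
  obtain ⟨w, hw⟩ := h (hg.indicator hball) (by rwa [lintegral_indicator hball])
    (integrable_id_withDensity_indicator_closedBall hgfin)
  rw [← lintegral_indicator hball]
  refine hw.lintegral_mul_lintegral_le hf hfin hcent fun x y => (H x y).trans' ?_
  gcongr
  exact indicator_le_self _ _ _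

theorem SantaloInequality.of_linearIsometryEquiv {F : Type*} [NormedAddCommGroup F]
    [InnerProductSpace ℝ F] [FiniteDimensional ℝ F] [MeasurableSpace F] [BorelSpace F]
    (hE : SantaloInequality E) (e : E ≃ₗᵢ[ℝ] F) : SantaloInequality F := by
  intro f hf hfin hcent g hg C H
  have he := e.measurePreserving
  rw [← he.lintegral_comp hf] at hfin ⊢
  rw [← he.lintegral_comp hg, ← e.toLinearEquiv.finrank_eq]
  refine hE (hf.comp he.measurable) hfin ?_ (hg.comp he.measurable) fun x y => ?_
  · change IsCentered (volume.withDensity fun x => f (e x))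
    rw [withDensity_comp_eq_map he (by fun_prop) e.symm_apply_apply hf,
      isCentered_map_iff (by fun_prop)]
    let L : F →L[ℝ] E := e.symm.toContinuousLinearEquiv
    exact ⟨L.integrable_comp hcent.integrable_id,
      (L.integral_comp_comm hcent.integrable_id).trans (by simp [hcent.integral_eq_zero])⟩
  · simpa using H (e x) (e y)

theorem santaloInequality_euclideanSpace_zero :
    SantaloInequality (EuclideanSpace ℝ (Fin 0)) := by
  intro f _ _ _ g _ C H
  rw [volume_euclideanSpace_eq_dirac, lintegral_dirac, lintegral_dirac,
    finrank_euclideanSpace_fin, pow_zero, mul_one]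
  simpa using H 0 0

theorem SantaloInequality.prod (hE : SantaloInequality E) : SantaloInequality (WithLp 2 (ℝ × E)) :=
  santaloInequality_of_exists_isSantaloPoint fun _ => hE.exists_isSantaloPoint

theorem santaloInequality_euclideanSpace (n : ℕ) :
    SantaloInequality (EuclideanSpace ℝ (Fin n)) := by
  induction n with
  | zero => exact santaloInequality_euclideanSpace_zero
  | succ n ih =>
    have hfinrank : finrank ℝ (WithLp 2 (ℝ × EuclideanSpace ℝ (Fin n))) = n + 1 := by
      rw [(WithLp.linearEquiv 2 ℝ _).finrank_eq, finrank_prod, finrank_self,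
        finrank_euclideanSpace_fin, add_comm]
    exact ih.prod.of_linearIsometryEquiv
      ((stdOrthonormalBasis ℝ _).reindex (finCongr hfinrank)).repr

variable (E) in
theorem santaloInequality : SantaloInequality E :=
  (santaloInequality_euclideanSpace (finrank ℝ E)).of_linearIsometryEquiv
    (stdOrthonormalBasis ℝ E).repr.symm

end Santalo

section Gaussian

section InnerProductSpace

variable {E : Type*} [NormedAddCommGroup E] [InnerProductSpace ℝ E]

theorem exp_neg_sq_norm_mul_exp_neg_sq_norm_le {r : ℝ} (hr : 0 ≤ r) {x y : E} (hxy : r ≤ dist x y) :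
    Real.exp (-‖x‖ ^ 2 / 2) * Real.exp (-‖y‖ ^ 2 / 2) ≤
      Real.exp (-r ^ 2 / 2) * Real.exp (-⟪x, y⟫) := by
  have hsq : r ^ 2 ≤ ‖x‖ ^ 2 - 2 * ⟪x, y⟫ + ‖y‖ ^ 2 := by
    rw [← norm_sub_sq_real, ← dist_eq_norm]
    gcongr
  rw [← Real.exp_add, ← Real.exp_add, Real.exp_le_exp]
  linarith

variable [FiniteDimensional ℝ E] [MeasurableSpace E] [BorelSpace E]

theorem integrable_exp_neg_mul_sq_norm {b : ℝ} (hb : 0 < b) :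
    Integrable fun x : E => Real.exp (-b * ‖x‖ ^ 2) := by
  refine Integrable.of_integral_ne_zero ?_
  rw [GaussianFourier.integral_rexp_neg_mul_sq_norm hb]
  positivity

theorem integrable_exp_neg_sq_norm_smul :
    Integrable fun x : E => Real.exp (-‖x‖ ^ 2 / 2) • x := by
  refine (integrable_exp_neg_mul_sq_norm (E := E) (b := 1 / 4) (by norm_num)).mono'
    (by fun_prop) (.of_forall fun x => ?_)
  have hnorm : ‖x‖ ≤ Real.exp (1 / 4 * ‖x‖ ^ 2) := by
    nlinarith [Real.add_one_le_exp (1 / 4 * ‖x‖ ^ 2), sq_nonneg (1 - ‖x‖ / 2)]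
  calc ‖Real.exp (-‖x‖ ^ 2 / 2) • x‖ = Real.exp (-‖x‖ ^ 2 / 2) * ‖x‖ := by
        rw [norm_smul, Real.norm_of_nonneg (Real.exp_pos _).le]
    _ ≤ Real.exp (-‖x‖ ^ 2 / 2) * Real.exp (1 / 4 * ‖x‖ ^ 2) := by gcongr
    _ = Real.exp (-(1 / 4) * ‖x‖ ^ 2) := by
        rw [← Real.exp_add]
        ring_nf

end InnerProductSpace

instance isProbabilityMeasure_stdGaussian (d : ℕ) : IsProbabilityMeasure (stdGaussian d) where
  measure_univ := by
    have hint : Integrable fun x : EuclideanSpace ℝ (Fin d) =>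
        (2 * Real.pi) ^ (-(d : ℝ) / 2) * Real.exp (-(1 / 2) * ‖x‖ ^ 2) :=
      (integrable_exp_neg_mul_sq_norm (by norm_num)).const_mul _
    have hexponent : ∀ x : EuclideanSpace ℝ (Fin d), -‖x‖ ^ 2 / 2 = -(1 / 2) * ‖x‖ ^ 2 :=
      fun x => by ring
    simp_rw [stdGaussian, withDensity_apply _ MeasurableSet.univ, Measure.restrict_univ, hexponent]
    rw [← ofReal_integral_eq_lintegral_ofReal hint (.of_forall fun x => by positivity),
      integral_const_mul, GaussianFourier.integral_rexp_neg_mul_sq_norm (by norm_num),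
      finrank_euclideanSpace_fin, show Real.pi / (1 / 2) = 2 * Real.pi by ring,
      ← Real.rpow_add (by positivity), neg_div, neg_add_cancel, Real.rpow_zero,
      ENNReal.ofReal_one]

theorem integrable_id_stdGaussian (d : ℕ) : Integrable (fun x => x) (stdGaussian d) := by
  rw [stdGaussian, integrable_withDensity_iff_integrable_smul' (by fun_prop) (by simp)]
  refine (integrable_exp_neg_sq_norm_smul.smul ((2 * Real.pi) ^ (-(d : ℝ) / 2))).congr
    (.of_forall fun x => ?_)
  dsimp only [Pi.smul_apply]
  rw [ENNReal.toReal_ofReal (by positivity), smul_smul]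

theorem rpow_neg_half_sq_mul_pow {a : ℝ} (ha : 0 < a) (d : ℕ) :
    (a ^ (-(d : ℝ) / 2)) ^ 2 * a ^ d = 1 := by
  rw [← Real.rpow_natCast (_ ^ _), ← Real.rpow_mul ha.le, ← Real.rpow_natCast,
    ← Real.rpow_add ha]
  norm_num

theorem stdGaussian_mul_stdGaussian_le {d : ℕ} {A B : Set (EuclideanSpace ℝ (Fin d))}
    (hA : MeasurableSet A) (hB : MeasurableSet B) (hbar : ∫ x in A, x ∂(stdGaussian d) = 0)
    {r : ℝ} (hr : 0 ≤ r) (hAB : ∀ x ∈ A, ∀ y ∈ B, r ≤ dist x y) :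
    stdGaussian d A * stdGaussian d B ≤ ENNReal.ofReal (Real.exp (-r ^ 2 / 2)) := by
  set κ : ℝ := (2 * Real.pi) ^ (-(d : ℝ) / 2)
  set ρ : EuclideanSpace ℝ (Fin d) → ℝ≥0∞ :=
    fun x => ENNReal.ofReal (κ * Real.exp (-‖x‖ ^ 2 / 2))
  have hρ : Measurable ρ := by fun_prop
  have hmass : ∀ {S}, MeasurableSet S → ∫⁻ x, S.indicator ρ x = stdGaussian d S := fun hS => by
    rw [lintegral_indicator hS, stdGaussian, withDensity_apply _ hS]
  have hcent : IsCentered (volume.withDensity (A.indicator ρ)) := by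
    rw [withDensity_indicator hA, ← restrict_withDensity hA]
    exact ⟨(integrable_id_stdGaussian d).integrableOn, hbar⟩
  have hdual : ∀ x y, A.indicator ρ (0 + x) * B.indicator ρ y ≤
      ENNReal.ofReal (κ ^ 2 * Real.exp (-r ^ 2 / 2)) * ENNReal.ofReal (Real.exp (-⟪x, y⟫)) := by
    intro x y
    rw [zero_add]
    by_cases hxy : x ∈ A ∧ y ∈ B
    · rw [indicator_of_mem hxy.1, indicator_of_mem hxy.2, ← ENNReal.ofReal_mul (by positivity),
        ← ENNReal.ofReal_mul (by positivity), mul_mul_mul_comm, ← sq, mul_assoc]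
      have hexp := exp_neg_sq_norm_mul_exp_neg_sq_norm_le hr (hAB x hxy.1 y hxy.2)
      exact ENNReal.ofReal_le_ofReal (mul_le_mul_of_nonneg_left hexp (sq_nonneg κ))
    · rcases not_and_or.1 hxy with hx | hy
      · simp [hx]
      · simp [hy]
  calc stdGaussian d A * stdGaussian d B
      = (∫⁻ x, A.indicator ρ x) * ∫⁻ y, B.indicator ρ y := by rw [hmass hA, hmass hB]
    _ ≤ ENNReal.ofReal (κ ^ 2 * Real.exp (-r ^ 2 / 2)) * ENNReal.ofReal (2 * Real.pi) ^ d := by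
        simpa only [finrank_euclideanSpace_fin] using
          santaloInequality _ (hρ.indicator hA) (by rw [hmass hA]; exact measure_ne_top _ _) hcent
            (hρ.indicator hB) hdual
    _ = ENNReal.ofReal (Real.exp (-r ^ 2 / 2)) := by
        rw [← ENNReal.ofReal_pow (by positivity), ← ENNReal.ofReal_mul (by positivity),
          mul_right_comm, rpow_neg_half_sq_mul_pow (by positivity), one_mul]

end Gaussian

/-- **Gaussian concentration for sets with barycenter at the origin** (Theorem 4.1): if
`γ(A) > 0` and `∫_A x dγ = 0`, then the `r`-enlargement `A_r` of `A` satisfies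
`1 - γ(A_r) ≤ γ(A)⁻¹ e^{-r²/2}`. -/
theorem gaussian_concentration_centered (d : ℕ) (hd : 1 ≤ d)
    (A : Set (EuclideanSpace ℝ (Fin d))) (hA : MeasurableSet A)
    (hApos : 0 < stdGaussian d A) (hbar : ∫ x in A, x ∂(stdGaussian d) = 0)
    (r : ℝ) (hr : 0 < r) :
    1 - stdGaussian d {x | Metric.infDist x A ≤ r} ≤
      (stdGaussian d A)⁻¹ * ENNReal.ofReal (Real.exp (-r ^ 2 / 2)) := by
  set Ar : Set (EuclideanSpace ℝ (Fin d)) := {x | Metric.infDist x A ≤ r}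
  have hAr : MeasurableSet Ar := measurableSet_le measurable_infDist measurable_const
  have hdist : ∀ x ∈ A, ∀ y ∈ Arᶜ, r ≤ dist x y := fun x hx y hy =>
    dist_comm x y ▸ (not_le.1 (notMem_ofPred_iff.1 hy)).le.trans (Metric.infDist_le_dist_of_mem hx)
  calc 1 - stdGaussian d Ar = stdGaussian d Arᶜ := (prob_compl_eq_one_sub hAr).symm
    _ ≤ (stdGaussian d A)⁻¹ * ENNReal.ofReal (Real.exp (-r ^ 2 / 2)) :=
        (ENNReal.mul_le_iff_le_inv hApos.ne' (measure_ne_top _ _)).1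
          (stdGaussian_mul_stdGaussian_le hA hAr.compl hbar hr.le hdist)
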